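/- arXiv:2111.01966 — 2 statements merged into one kernel-verified Lean document; each statement's English description precedes it below -/
import Mathlib

section
/- Let V be a finite-dimensional real vector space with a symmetric bilinear form ⟨·,·⟩, a, b, d ∈ {−1,1}, n ≥ 2 an integer, H ∈ ℝ. Let g : ℝ → ℝ be positive and twice differentiable with g′(t)² + d·g(t)²·(a + b·κ₁(t)²) = 0 and g″(t) = −d·g(t)·(a + b·κ₁(t)·κ₂(t)) for all t, where κ₁ = H + g^(−n), κ₂ = H − (n−1)·g^(−n) (i.e. the associated constant C equals 0). Let α : ℝ → V be twice differentiable and β : ℝ → V differentiable with α″ = b·d·κ₂·β − a·d·α and β′ = −κ₂·α′, satisfying ⟨α(0),α(0)⟩ = a, ⟨β(0),β(0)⟩ = b, ⟨α′(0),α′(0)⟩ = d and ⟨α(0),β(0)⟩ = ⟨α(0),α′(0)⟩ = ⟨β(0),α′(0)⟩ = 0. Set ρ₀ := −g′(0)·α′(0) + b·d·g(0)·κ₁(0)·β(0) − d·a·g(0)·α(0), and let y ∈ V satisfy ⟨y, α(t)⟩ = ⟨y, β(t)⟩ = ⟨y, α′(t)⟩ = 0 for all t. Then φ(y,t) :=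 y + α(t) + (d·⟨y,y⟩/(2·g(t)))·ρ₀ satisfies ⟨φ(y,t), φ(y,t)⟩ = a for every t ∈ ℝ. -/
theorem aux_term (K c x y : ℝ) (h1 : c ≤ 2 * K) (h2 : -c ≤ 2 * K) :
    c * (x * y) ≤ K * (x ^ 2 + y ^ 2) ∧ -(K * (x ^ 2 + y ^ 2)) ≤ c * (x * y) := by
  constructor
  · nlinarith [mul_nonneg (sub_nonneg.2 h1) (sq_nonneg (x + y)),
      mul_nonneg (sub_nonneg.2 h2) (sq_nonneg (x - y))]
  · nlinarith [mul_nonneg (sub_nonneg.2 h1) (sq_nonneg (x - y)),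
      mul_nonneg (sub_nonneg.2 h2) (sq_nonneg (x + y))]

theorem aux_gronwall (E E' K : ℝ → ℝ) (hE : ∀ t, HasDerivAt E (E' t) t)
    (hK : Continuous K) (h0 : E 0 = 0) (h1 : ∀ t, E' t ≤ K t * E t)
    (h2 : ∀ t, -(K t * E t) ≤ E' t) : ∀ t, E t ≤ 0 := by
  have hF : ∀ t, HasDerivAt (fun s => ∫ x in (0:ℝ)..s, K x) (K t) t := fun t =>
    (hK.integral_hasStrictDerivAt 0 t).hasDerivAt
  set F : ℝ → ℝ := fun s => ∫ x in (0:ℝ)..s, K x with hFd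
  intro t
  rcases le_total 0 t with ht | ht
  · have hd : ∀ t, HasDerivAt (fun s => E s * Real.exp (-F s))
        (E' t * Real.exp (-F t) + E t * (Real.exp (-F t) * (-K t))) t := fun t =>
      (hE t).mul (hF t).neg.exp
    have ha : Antitone (fun s => E s * Real.exp (-F s)) := by
      apply antitone_of_deriv_nonpos (fun t => (hd t).differentiableAt)
      intro s
      rw [(hd s).deriv]
      nlinarith [mul_nonneg (sub_nonneg.2 (h1 s)) (Real.exp_pos (-F s)).le]
    have h := ha ht
    simp only [h0, zero_mul] at h
    by_contra hc
    push Not at hc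
    linarith [mul_pos hc (Real.exp_pos (-F t))]
  · have hd : ∀ t, HasDerivAt (fun s => E s * Real.exp (F s))
        (E' t * Real.exp (F t) + E t * (Real.exp (F t) * (K t))) t := fun t =>
      (hE t).mul (hF t).exp
    have ha : Monotone (fun s => E s * Real.exp (F s)) := by
      apply monotone_of_deriv_nonneg (fun t => (hd t).differentiableAt)
      intro s
      rw [(hd s).deriv]
      nlinarith [mul_nonneg (sub_nonneg.2 (h2 s)) (Real.exp_pos (F s)).le]
    have h := ha ht
    simp only [h0, zero_mul] at h
    by_contra hc
    push Not at hc
    linarith [mul_pos hc (Real.exp_pos (F t))]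

theorem aux_system (e m : ℝ) (he : e = -1 ∨ e = 1) (hm : m = -1 ∨ m = 1)
    (k p q r u v w : ℝ → ℝ) (hk : Continuous k)
    (hp : ∀ t, HasDerivAt p (2 * u t) t)
    (hq : ∀ t, HasDerivAt q (-2 * k t * w t) t)
    (hr : ∀ t, HasDerivAt r (2 * (e * k t * w t - m * u t)) t)
    (hv : ∀ t, HasDerivAt v (w t - k t * u t) t)
    (hu : ∀ t, HasDerivAt u (r t + e * k t * v t - m * p t) t)
    (hw : ∀ t, HasDerivAt w (-k t * r t + e * k t * q t - m * v t) t)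
    (p0 : p 0 = 0) (q0 : q 0 = 0) (r0 : r 0 = 0) (u0 : u 0 = 0) (v0 : v 0 = 0)
    (w0 : w 0 = 0) (t : ℝ) : p t = 0 ∧ u t = 0 ∧ v t = 0 := by
  have key := aux_gronwall
    (fun t => p t ^ 2 + q t ^ 2 + r t ^ 2 + u t ^ 2 + v t ^ 2 + w t ^ 2) _
    (fun t => 24 * (1 + k t ^ 2))
    (fun t => ((((((hp t).pow 2).add ((hq t).pow 2)).add ((hr t).pow 2)).add
      ((hu t).pow 2)).add ((hv t).pow 2)).add ((hw t).pow 2))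
    (by fun_prop) (by simp [p0, q0, r0, u0, v0, w0]) ?_ ?_ t
  · refine ⟨?_, ?_, ?_⟩ <;> apply pow_eq_zero_iff (two_ne_zero) |>.1 <;>
    nlinarith [sq_nonneg (p t), sq_nonneg (q t), sq_nonneg (r t), sq_nonneg (u t),
      sq_nonneg (v t), sq_nonneg (w t)]
  all_goals
    intro t
    try simp only [Nat.cast_ofNat, Nat.add_one_sub_one, pow_one]
    generalize p t = p, q t = q, r t = r, u t = u, v t = v, w t = w, k t = k
    have B1 : 1 ≤ 1 + k ^ 2 := by nlinarith
    have B2 : k ≤ 1 + k ^ 2 := by nlinarith [sq_nonneg (k - 1)]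
    have B3 : -k ≤ 1 + k ^ 2 := by nlinarith [sq_nonneg (k + 1)]
    generalize 1 + k ^ 2 = K at *
    have P : ∀ x : ℝ, 0 ≤ K * x ^ 2 := fun x => mul_nonneg (by linarith) (sq_nonneg x)
    have Q := P p
    have Q2 := P q
    have Q3 := P r
    have Q4 := P u
    have Q5 := P v
    have Q6 := P w
    have T : ∀ x y : ℝ, x * y ≤ K * (x ^ 2 + y ^ 2) ∧ -(K * (x ^ 2 + y ^ 2)) ≤ x * y := by
      intro x y
      simpa using aux_term K 1 x y (by linarith) (by linarith)
    have S : ∀ x y : ℝ, 2 * (x * y) ≤ K * (x ^ 2 + y ^ 2) ∧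
        -(K * (x ^ 2 + y ^ 2)) ≤ 2 * (x * y) := fun x y =>
      aux_term K 2 x y (by linarith) (by linarith)
    have R : ∀ x y : ℝ, 2 * k * (x * y) ≤ K * (x ^ 2 + y ^ 2) ∧
        -(K * (x ^ 2 + y ^ 2)) ≤ 2 * k * (x * y) := fun x y =>
      aux_term K (2 * k) x y (by linarith) (by linarith)
    have s1 := S p u
    have s2 := S r u
    have s3 := S v w
    have r1 := R q w
    have r2 := R r w
    have r3 := R u v
    rcases he with rfl | rfl <;> rcases hm with rfl | rfl <;> nlinarith only [s1, s2, s3, r1, r2, r3, Q, Q2, Q3, Q4, Q5, Q6]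

/-- Theorem 7.2 (C = 0 immersion lies in the quadric): the map
`φ(y,t) = y + α(t) + (d·⟨y,y⟩/(2·g(t)))·ρ₀` satisfies `⟨φ(y,t),φ(y,t)⟩ = a`. -/
theorem stmt_8 (V : Type*) [NormedAddCommGroup V] [NormedSpace ℝ V]
    [FiniteDimensional ℝ V]
    (B : V →ₗ[ℝ] V →ₗ[ℝ] ℝ) (hBsymm : ∀ x y : V, B x y = B y x)
    (n : ℕ) (hn : 2 ≤ n) (H a b d : ℝ)
    (ha : a = -1 ∨ a = 1) (hb : b = -1 ∨ b = 1) (hd : d = -1 ∨ d = 1)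
    (g : ℝ → ℝ) (hgpos : ∀ t, 0 < g t)
    (hg : Differentiable ℝ g) (hg' : Differentiable ℝ (deriv g))
    (κ₁ κ₂ : ℝ → ℝ)
    (hκ₁ : ∀ t, κ₁ t = H + g t ^ (-(n : ℤ)))
    (hκ₂ : ∀ t, κ₂ t = H - ((n : ℝ) - 1) * g t ^ (-(n : ℤ)))
    (hfirstint : ∀ t : ℝ,
      (deriv g t) ^ 2 + d * (g t) ^ 2 * (a + b * (κ₁ t) ^ 2) = 0)
    (hg'' : ∀ t : ℝ, deriv (deriv g) t = -d * g t * (a + b * κ₁ t * κ₂ t))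
    (α β : ℝ → V)
    (hα : Differentiable ℝ α) (hα' : Differentiable ℝ (deriv α))
    (hβ : Differentiable ℝ β)
    (hαeq : ∀ t : ℝ, deriv (deriv α) t = (b * d * κ₂ t) • β t - (a * d) • α t)
    (hβeq : ∀ t : ℝ, deriv β t = (-(κ₂ t)) • deriv α t)
    (hαα : B (α 0) (α 0) = a) (hββ : B (β 0) (β 0) = b)
    (hα'α' : B (deriv α 0) (deriv α 0) = d)
    (hαβ : B (α 0) (β 0) = 0) (hαα' : B (α 0) (deriv α 0) = 0)
    (hβα' : B (β 0) (deriv α 0) = 0)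
    (ρ₀ : V)
    (hρ₀ : ρ₀ = (-(deriv g 0)) • deriv α 0
      + (b * d * g 0 * κ₁ 0) • β 0 - (d * a * g 0) • α 0)
    (y : V)
    (hyα : ∀ t : ℝ, B y (α t) = 0) (hyβ : ∀ t : ℝ, B y (β t) = 0)
    (hyα' : ∀ t : ℝ, B y (deriv α t) = 0) :
    ∀ t : ℝ,
      B (y + α t + (d * B y y / (2 * g t)) • ρ₀)
        (y + α t + (d * B y y / (2 * g t)) • ρ₀) = a := by
  have hBd : ∀ (f h : ℝ → V) (f' h' : V) (t : ℝ), HasDerivAt f f' t → HasDerivAt h h' t →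
      HasDerivAt (fun s => B (f s) (h s)) (B f' (h t) + B (f t) h') t := by
    intro f h f' h' t hf hh
    let B2 : V →L[ℝ] V →L[ℝ] ℝ :=
      LinearMap.toContinuousLinearMap
        ((LinearMap.toContinuousLinearMap : (V →ₗ[ℝ] ℝ) ≃ₗ[ℝ] (V →L[ℝ] ℝ)).toLinearMap ∘ₗ B)
    have h1 : HasDerivAt (fun s => B2 (f s)) (B2 f') t := B2.hasFDerivAt.comp_hasDerivAt t hf
    exact h1.clm_apply hh
  have hgne : ∀ t, g t ≠ 0 := fun t => (hgpos t).ne'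
  have dα : ∀ t, HasDerivAt α (deriv α t) t := fun t => (hα t).hasDerivAt
  have dα' : ∀ t, HasDerivAt (deriv α) ((b * d * κ₂ t) • β t - (a * d) • α t) t := fun t =>
    hαeq t ▸ (hα' t).hasDerivAt
  have dβ : ∀ t, HasDerivAt β ((-(κ₂ t)) • deriv α t) t := fun t =>
    hβeq t ▸ (hβ t).hasDerivAt
  have dg : ∀ t, HasDerivAt g (deriv g t) t := fun t => (hg t).hasDerivAt
  have dg' : ∀ t, HasDerivAt (deriv g) (-d * g t * (a + b * κ₁ t * κ₂ t)) t := fun t =>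
    hg'' t ▸ (hg' t).hasDerivAt
  have a2 : a * a = 1 := by rcases ha with rfl | rfl <;> norm_num
  have b2 : b * b = 1 := by rcases hb with rfl | rfl <;> norm_num
  have d2 : d * d = 1 := by rcases hd with rfl | rfl <;> norm_num
  have hk : Continuous κ₂ := by
    rw [funext hκ₂]
    exact continuous_const.sub (continuous_const.mul
      (hg.continuous.zpow₀ _ (fun t => Or.inl (hgne t))))
  have dgk : ∀ t, HasDerivAt (fun s => g s * κ₁ s) (deriv g t * κ₂ t) t := by
    intro t
    have h1 : HasDerivAt κ₁ (((-(n:ℤ) : ℤ) : ℝ) * g t ^ (-(n:ℤ) - 1) * deriv g t) t := by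
      rw [funext hκ₁]
      exact ((hasDerivAt_zpow (-(n:ℤ)) (g t) (Or.inl (hgne t))).comp t (dg t)).const_add H
    refine HasDerivAt.congr_deriv ((dg t).mul h1) ?_
    symm
    rw [hκ₁, hκ₂, zpow_sub_one₀ (hgne t)]
    have := hgne t
    push_cast
    field_simp
    ring
  have dρ : ∀ t, HasDerivAt (fun s => (-(deriv g s)) • deriv α s
      + ((b * d) * (g s * κ₁ s)) • β s - ((d * a) * g s) • α s) 0 t := by
    intro t
    refine HasDerivAt.congr_deriv ((((dg' t).neg.smul (dα' t)).add (((dgk t).const_mul (b * d)).smul (dβ t))).sub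
      (((dg t).const_mul (d * a)).smul (dα t))) ?_
    simp only [Pi.neg_apply]
    module
  have hρ : ∀ t, ρ₀ = (-(deriv g t)) • deriv α t
      + ((b * d) * (g t * κ₁ t)) • β t - ((d * a) * g t) • α t := by
    intro t
    have h := is_const_of_deriv_eq_zero (fun s => (dρ s).differentiableAt)
      (fun s => (dρ s).deriv) 0 t
    rw [← h, hρ₀]
    simp only [mul_assoc]
  have hsys := aux_system (b * d) (a * d)
    (by rcases hb with rfl | rfl <;> rcases hd with rfl | rfl <;> norm_num)
    (by rcases ha with rfl | rfl <;> rcases hd with rfl | rfl <;> norm_num)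
    κ₂ (fun t => B (α t) (α t) - a) (fun t => B (β t) (β t) - b)
    (fun t => B (deriv α t) (deriv α t) - d) (fun t => B (α t) (deriv α t))
    (fun t => B (α t) (β t)) (fun t => B (β t) (deriv α t)) hk
    (by
      intro t
      refine HasDerivAt.congr_deriv ((hBd _ _ _ _ t (dα t) (dα t)).sub_const a) ?_
      symm
      rw [hBsymm (deriv α t) (α t)]; ring)
    (by
      intro t
      refine HasDerivAt.congr_deriv ((hBd _ _ _ _ t (dβ t) (dβ t)).sub_const b) ?_
      symm
      simp only [map_smul, LinearMap.smul_apply, smul_eq_mul]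
      rw [hBsymm (deriv α t) (β t)]; ring)
    (by
      intro t
      refine HasDerivAt.congr_deriv ((hBd _ _ _ _ t (dα' t) (dα' t)).sub_const d) ?_
      symm
      simp only [map_smul, map_sub, LinearMap.sub_apply, LinearMap.smul_apply, smul_eq_mul]
      rw [hBsymm (deriv α t) (β t), hBsymm (deriv α t) (α t)]; ring)
    (by
      intro t
      refine HasDerivAt.congr_deriv ((hBd _ _ _ _ t (dα t) (dβ t))) ?_
      symm
      simp only [map_smul, smul_eq_mul]
      rw [hBsymm (deriv α t) (β t)]; ring)
    (by
      intro t
      refine HasDerivAt.congr_deriv ((hBd _ _ _ _ t (dα t) (dα' t))) ?_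
      symm
      simp only [map_smul, map_sub, smul_eq_mul]
      linear_combination d * a2)
    (by
      intro t
      refine HasDerivAt.congr_deriv ((hBd _ _ _ _ t (dβ t) (dα' t))) ?_
      symm
      simp only [map_smul, map_sub, LinearMap.smul_apply, smul_eq_mul]
      rw [hBsymm (β t) (α t)]
      linear_combination (-(d * κ₂ t)) * b2)
    (by simp [hαα]) (by simp [hββ]) (by simp [hα'α']) hαα' hαβ hβα'
  have hρρ : B ρ₀ ρ₀ = 0 := by
    rw [hρ₀]
    simp only [map_smul, map_sub, map_add, LinearMap.sub_apply, LinearMap.add_apply,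
      LinearMap.smul_apply, smul_eq_mul]
    rw [hBsymm (deriv α 0) (β 0), hBsymm (deriv α 0) (α 0), hBsymm (β 0) (α 0),
      hαα, hββ, hα'α', hαβ, hαα', hβα']
    have h := hfirstint 0
    rcases ha with rfl | rfl <;> rcases hb with rfl | rfl <;> rcases hd with rfl | rfl <;>
      first | linear_combination h | linear_combination -h
  have hyρ : B y ρ₀ = 0 := by
    rw [hρ₀]
    simp [hyα, hyβ, hyα']
  intro t
  obtain ⟨hp, hu, hv⟩ := hsys t
  have hp' : B (α t) (α t) = a := by linarith
  have hαρ : B (α t) ρ₀ = -(d * g t) := by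
    rw [hρ t]
    simp only [map_smul, map_sub, map_add, smul_eq_mul]
    rw [hp', hu, hv]
    linear_combination (-(d * g t)) * a2
  simp only [map_smul, map_add, LinearMap.add_apply, LinearMap.smul_apply, smul_eq_mul]
  rw [hBsymm ρ₀ y, hBsymm ρ₀ (α t), hBsymm (α t) y, hρρ, hyρ, hαρ, hyα, hp']
  have := hgne t
  have hc : d * B y y / (2 * g t) * g t = d * B y y / 2 := by field_simp
  linear_combination (-2 * d) * hc - B y y * d2
end

section
/- Let n > 2 be an integer, let H ∈ ℝ satisfy −2√(n−1)/n < H < 1, and let C ∈ ℝ be arbitrary. Then there exists a twice continuously differentiable function g : ℝ → ℝ with g(t) > 0 and g′(t)² = C + g(t)² − (H·g(t) + g(t)^(1−n))² for all t ∈ ℝ, such that g attains a global minimum at some point and g is unbounded above (in particular g is nonconstant). -/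
open Set Manifold in
theorem aux_global {E : Type} [NormedAddCommGroup E] [NormedSpace ℝ E] [FiniteDimensional ℝ E]
    (X : E → E) (hX : ContDiff ℝ 1 X) (B : ℝ) (hB : 0 < B)
    (hb : ∀ x, ‖X x‖ ≤ B * (1 + ‖x‖)) (x₀ : E) :
    ∃ γ : ℝ → E, γ 0 = x₀ ∧ ∀ t, HasDerivAt γ (X (γ t)) t := by
  have : CompleteSpace E := FiniteDimensional.complete ℝ E
  have hε : 0 < 1 / (2 * B) := by positivity
  have key := exists_isMIntegralCurve_of_isMIntegralCurveOn (I := 𝓘(ℝ, E)) (M := E) (v := X)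
    (contMDiff_vectorSpace_iff_contDiff.2 hX) hε ?_ x₀
  · obtain ⟨γ, h0, h⟩ := key
    refine ⟨γ, h0, fun t => ?_⟩
    have h1 : HasFDerivAt γ ((1 : ℝ →L[ℝ] ℝ).smulRight (X (γ t))) t :=
      hasMFDerivAt_iff_hasFDerivAt.1 (h t)
    exact h1.hasDerivAt.congr_deriv (by simp)
  · intro x
    obtain ⟨K, hK⟩ := (hX.contDiffOn (s := Metric.closedBall x (1 + ‖x‖))).exists_lipschitzOnWith
      one_ne_zero (convex_closedBall _ _) (isCompact_closedBall _ _)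
    let a : NNReal := ⟨1 + ‖x‖, by positivity⟩
    let L : NNReal := ⟨2 * B * (1 + ‖x‖), by positivity⟩
    have hp : IsPicardLindelof (fun _ ↦ X) (tmin := -(1 / (2 * B))) (tmax := 1 / (2 * B))
        ⟨0, by constructor <;> linarith⟩ x a 0 L K := by
      apply IsPicardLindelof.of_time_independent
      · intro y hy
        have h1 : ‖y‖ ≤ ‖x‖ + (1 + ‖x‖) := by
          have := norm_le_norm_add_norm_sub' y x
          rw [Metric.mem_closedBall, dist_eq_norm] at hy
          have hy' : ‖y - x‖ ≤ 1 + ‖x‖ := hy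
          linarith
        calc ‖X y‖ ≤ B * (1 + ‖y‖) := hb y
          _ ≤ B * (1 + (‖x‖ + (1 + ‖x‖))) := by gcongr
          _ = 2 * B * (1 + ‖x‖) := by ring
      · exact hK
      · change 2 * B * (1 + ‖x‖) * max (1 / (2 * B) - 0) (0 - -(1 / (2 * B))) ≤ 1 + ‖x‖ - 0
        simp only [sub_zero, zero_sub, neg_neg, max_self]
        apply le_of_eq; field_simp
    obtain ⟨γ, h0, h⟩ := hp.exists_eq_forall_mem_Icc_hasDerivWithinAt₀
    refine ⟨γ, h0, fun t ht => ?_⟩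
    have h2 := (h t (Ioo_subset_Icc_self ht)).mono Ioo_subset_Icc_self
    have h3 : HasFDerivWithinAt γ ((1 : ℝ →L[ℝ] ℝ).smulRight (X (γ t)))
        (Ioo (-(1 / (2 * B))) (1 / (2 * B))) t := by
      rw [hasDerivWithinAt_iff_hasFDerivWithinAt] at h2
      have h4 : (1 : ℝ →L[ℝ] ℝ).smulRight (X (γ t))
          = ContinuousLinearMap.toSpanSingleton ℝ (X (γ t)) := by
        ext; simp
      rw [h4]
      exact h2
    exact hasMFDerivWithinAt_iff_hasFDerivWithinAt.2 h3

theorem aux_H (m : ℕ) (H : ℝ) (hm : 2 ≤ m)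
    (hH₁ : -(2 * Real.sqrt (m : ℝ) / ((m : ℝ) + 1)) < H) (hH₂ : H < 1) :
    |H| < 1 ∧ ∀ W : ℝ, 0 < W → 0 < 1 - (H + W) * (H - m * W) := by
  have hm' : (2 : ℝ) ≤ m := by exact_mod_cast hm
  rcases le_or_gt 0 H with h | h
  · refine ⟨by rwa [abs_of_nonneg h], fun W hW => ?_⟩
    have : 0 ≤ ((m : ℝ) - 1) * H * W := by
      apply mul_nonneg (mul_nonneg (by linarith) h) hW.le
    have : 0 < (m : ℝ) * W ^ 2 := by positivity
    nlinarith
  · have hs := Real.sq_sqrt (show (0 : ℝ) ≤ m by positivity)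
    have h1 : ((m : ℝ) + 1) * (-H) < 2 * Real.sqrt m := by
      have : -H < 2 * Real.sqrt (m : ℝ) / ((m : ℝ) + 1) := by linarith
      rw [lt_div_iff₀ (by positivity)] at this
      linarith
    have h2 : (((m : ℝ) + 1) * (-H)) ^ 2 < (2 * Real.sqrt m) ^ 2 := by
      apply pow_lt_pow_left₀ h1 _ two_ne_zero
      apply mul_nonneg (by positivity) (by linarith)
    have h3 : ((m : ℝ) + 1) ^ 2 * H ^ 2 < 4 * m := by nlinarith
    constructor
    · rw [abs_of_neg h]
      by_contra hc
      have : 1 ≤ H ^ 2 := by nlinarith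
      nlinarith [sq_nonneg ((m : ℝ) - 1)]
    · intro W hW
      have : 0 < 4 * (m : ℝ) * (1 - (H + W) * (H - m * W)) := by
        nlinarith [sq_nonneg (2 * m * W + (m - 1) * H)]
      exact pos_of_mul_pos_right this (by positivity)

/-- half derivative -/
noncomputable def auxf (m : ℕ) (H v : ℝ) : ℝ :=
  v - (H * v + v⁻¹ ^ m) * (H - m * v⁻¹ ^ (m + 1))

noncomputable def auxq (m : ℕ) (H C v : ℝ) : ℝ :=
  C + v ^ 2 - (H * v + v⁻¹ ^ m) ^ 2

theorem auxq_deriv (m : ℕ) (H C v : ℝ) (hm : 2 ≤ m) (hv : 0 < v) :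
    HasDerivAt (auxq m H C) (2 * auxf m H v) v := by
  unfold auxq auxf
  have h1 : HasDerivAt (fun v : ℝ => v⁻¹ ^ m) (m * v⁻¹ ^ (m - 1) * (-(v ^ 2)⁻¹)) v :=
    (hasDerivAt_inv hv.ne').pow m
  have h2 := ((hasDerivAt_id v).const_mul H).add h1
  have h3 := ((hasDerivAt_id v).pow 2).const_add C
  refine (h3.sub (h2.pow 2)).congr_deriv ?_
  obtain ⟨k, rfl⟩ : ∃ k, m = k + 1 := ⟨m - 1, by omega⟩
  simp [pow_succ]
  field_simp
  ring

theorem auxf_pos (m : ℕ) (H v : ℝ) (hv : 0 < v)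
    (h : ∀ W : ℝ, 0 < W → 0 < 1 - (H + W) * (H - m * W)) : 0 < auxf m H v := by
  have h1 := mul_pos hv (h (v⁻¹ ^ (m + 1)) (by positivity))
  have h2 : v⁻¹ ^ m = v * v⁻¹ ^ (m + 1) := by
    rw [pow_succ]; field_simp
  unfold auxf
  rw [h2]
  nlinarith

theorem auxq_root (m : ℕ) (H C : ℝ) (hm : 2 ≤ m) (hH : |H| < 1) :
    ∃ v, 0 < v ∧ auxq m H C v = 0 := by
  have hC := abs_nonneg C
  have hC1 := neg_abs_le C
  have hC2 := le_abs_self C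
  have hHn := abs_nonneg H
  set a : ℝ := (3 + |C|)⁻¹ with ha
  set b : ℝ := (2 + |C|) / (1 - |H|) with hb
  have ha0 : 0 < a := by positivity
  have ha1 : a ≤ 1 := inv_le_one_of_one_le₀ (by linarith)
  have hb1 : 1 ≤ b := by
    rw [hb, le_div_iff₀ (by linarith)]; linarith
  have hbe : (1 - |H|) * b = 2 + |C| := by
    rw [hb]; field_simp [show (1 - |H|) ≠ 0 by linarith]
  have hqa : auxq m H C a ≤ 0 := by
    unfold auxq
    have h1 : a⁻¹ = 3 + |C| := by rw [ha, inv_inv]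
    have h2 : 3 + |C| ≤ a⁻¹ ^ m := by
      rw [h1]; exact le_self_pow₀ (by linarith) (by omega)
    have h3 : -1 ≤ H * a := by
      have := neg_abs_le (H * a)
      rw [abs_mul, abs_of_pos ha0] at this
      nlinarith
    nlinarith
  have hqb : 0 ≤ auxq m H C b := by
    unfold auxq
    have h1 : b⁻¹ ^ m ≤ 1 := pow_le_one₀ (by positivity) (inv_le_one_of_one_le₀ hb1)
    have h0 : 0 ≤ b⁻¹ ^ m := by positivity
    have h2 : |H * b + b⁻¹ ^ m| ≤ |H| * b + 1 := by
      refine (abs_add_le _ _).trans ?_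
      rw [abs_mul, abs_of_pos (show 0 < b by linarith), abs_of_nonneg h0]
      linarith
    have h3 : (H * b + b⁻¹ ^ m) ^ 2 ≤ (|H| * b + 1) ^ 2 := by
      rw [← sq_abs (H * b + b⁻¹ ^ m)]
      exact pow_le_pow_left₀ (abs_nonneg _) h2 2
    have h4 : 0 ≤ |H| * b := by positivity
    nlinarith
  have hcont : ContinuousOn (auxq m H C) (Set.Icc a b) := fun x hx =>
    (auxq_deriv m H C x hm (by linarith [hx.1])).continuousAt.continuousWithinAt
  obtain ⟨v, hv, h⟩ := intermediate_value_Icc (ha1.trans hb1) hcont ⟨hqa, hqb⟩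
  exact ⟨v, by linarith [hv.1], h⟩

theorem auxf_ext (m : ℕ) (H v₀ : ℝ) (hv : 0 < v₀) (hH : |H| < 1)
    (h : ∀ W : ℝ, 0 < W → 0 < 1 - (H + W) * (H - m * W)) :
    ∃ F : ℝ → ℝ, ContDiff ℝ 1 F ∧ (∀ x, 0 < F x) ∧ (∀ x, v₀ ≤ x → F x = auxf m H x) ∧
      ∃ B, 1 ≤ B ∧ ∀ x, |F x| ≤ B * (1 + |x|) := by
  set d := v₀ / 2 with hd
  have hd0 : 0 < d := by positivity
  let ψ : ℝ → ℝ := fun x => d + Real.smoothTransition (x / d - 1) * (x - d)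
  have hψd : ∀ x, d ≤ ψ x := by
    intro x
    rcases le_or_gt x d with hx | hx
    · have : Real.smoothTransition (x / d - 1) = 0 := by
        apply Real.smoothTransition.zero_of_nonpos
        have : x / d ≤ 1 := by rwa [div_le_one hd0]
        linarith
      simp [ψ, this]
    · have := mul_nonneg (Real.smoothTransition.nonneg (x / d - 1)) (sub_nonneg.2 hx.le)
      simp only [ψ]; linarith
  have hψu : ∀ x, ψ x ≤ 2 * d + |x| := by
    intro x
    have h1 : Real.smoothTransition (x / d - 1) * (x - d) ≤ |x - d| := by
      have h2 := Real.smoothTransition.nonneg (x / d - 1)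
      have h3 := Real.smoothTransition.le_one (x / d - 1)
      have h4 := le_abs_self (x - d)
      have h5 := abs_nonneg (x - d)
      nlinarith
    have h2 := abs_sub x d
    rw [abs_of_pos hd0] at h2
    simp only [ψ]; linarith
  have hψe : ∀ x, v₀ ≤ x → ψ x = x := by
    intro x hx
    have : Real.smoothTransition (x / d - 1) = 1 := by
      apply Real.smoothTransition.one_of_one_le
      have : 2 ≤ x / d := by rw [le_div_iff₀ hd0]; linarith
      linarith
    simp [ψ, this]
  have hψc : ContDiff ℝ 1 ψ := by
    have h1 : ContDiff ℝ 1 Real.smoothTransition := Real.smoothTransition.contDiff (n := 1)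
    have h2 : ContDiff ℝ 1 (fun x : ℝ => x / d - 1) := by fun_prop
    exact contDiff_const.add ((h1.comp h2).mul (by fun_prop))
  have hψ0 : ∀ x, ψ x ≠ 0 := fun x => (hd0.trans_le (hψd x)).ne'
  refine ⟨fun x => auxf m H (ψ x), ?_, fun x => auxf_pos m H _ (hd0.trans_le (hψd x)) h,
    fun x hx => congrArg (auxf m H) (hψe x hx), ?_⟩
  · unfold auxf
    have hi : ContDiff ℝ 1 (fun x => (ψ x)⁻¹) := hψc.inv hψ0
    fun_prop
  · set P := d⁻¹ ^ m with hP
    set Q := 1 + m * d⁻¹ ^ (m + 1) with hQ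
    have hP0 : 0 ≤ P := by positivity
    have hQ0 : 0 ≤ m * d⁻¹ ^ (m + 1) := by positivity
    have hQ1 : 1 ≤ Q := by linarith
    have hbd : ∀ u, d ≤ u → |auxf m H u| ≤ u + (u + P) * Q := by
      intro u hu
      have hu0 : 0 < u := by linarith
      have hinv : u⁻¹ ≤ d⁻¹ := by gcongr
      have h1 : |H * u + u⁻¹ ^ m| ≤ u + P := by
        refine (abs_add_le _ _).trans ?_
        rw [abs_mul, abs_of_pos hu0, abs_of_pos (by positivity : 0 < u⁻¹ ^ m)]
        have : u⁻¹ ^ m ≤ P := by rw [hP]; gcongr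
        nlinarith
      have h2 : |H - m * u⁻¹ ^ (m + 1)| ≤ Q := by
        refine (abs_sub _ _).trans ?_
        rw [abs_of_nonneg (by positivity : 0 ≤ m * u⁻¹ ^ (m + 1))]
        have : m * u⁻¹ ^ (m + 1) ≤ m * d⁻¹ ^ (m + 1) := by gcongr
        linarith
      unfold auxf
      refine (abs_sub _ _).trans ?_
      rw [abs_of_pos hu0, abs_mul]
      gcongr
    refine ⟨1 + Q + 2 * d + (2 * d + P) * Q, by nlinarith, fun x => ?_⟩
    refine (hbd _ (hψd x)).trans ?_
    have hx := abs_nonneg x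
    have h1 : ψ x + (ψ x + P) * Q ≤ (2 * d + |x|) + ((2 * d + |x|) + P) * Q := by
      have := hψu x
      gcongr
    refine h1.trans ?_
    have : 0 ≤ (2 * d + P) * Q := by positivity
    nlinarith

/-- Theorem 10.1 (hyperbolic case, a·d = −1, b·d = 1): for
`−2√(n−1)/n < H < 1` and any `C`, there exists a positive `C²` global solution of
`g′² = C + g² − (H·g + g^(1−n))²` which attains a global minimum and is
unbounded above ('type 3' solution). -/
theorem stmt_15 (n : ℕ) (hn : 2 < n) (H : ℝ)
    (hH₁ : -(2 * Real.sqrt ((n : ℝ) - 1) / (n : ℝ)) < H) (hH₂ : H < 1)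
    (C : ℝ) :
    ∃ g : ℝ → ℝ, ContDiff ℝ 2 g ∧ (∀ t, 0 < g t) ∧
      (∀ t : ℝ, (deriv g t) ^ 2 =
        C + (g t) ^ 2 - (H * g t + g t ^ (1 - (n : ℤ))) ^ 2) ∧
      (∃ t₀ : ℝ, ∀ t : ℝ, g t₀ ≤ g t) ∧
      (∀ M : ℝ, ∃ t : ℝ, M < g t) := by
  obtain ⟨m, rfl⟩ : ∃ m, n = m + 1 := ⟨n - 1, by omega⟩
  have hm : 2 ≤ m := by omega
  obtain ⟨hH, hW⟩ := aux_H m H hm (by simpa using hH₁) hH₂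
  obtain ⟨v₀, hv₀, hq₀⟩ := auxq_root m H C hm hH
  obtain ⟨F, hFc, hFp, hFe, B, hB, hFb⟩ := auxf_ext m H v₀ hv₀ hH hW
  obtain ⟨γ, h0, hγ⟩ := aux_global (fun x : ℝ × ℝ => (x.2, F x.1))
    (contDiff_snd.prodMk (hFc.comp contDiff_fst)) B (by linarith) (by
      intro x
      rw [Prod.norm_def]
      have h1 : |x.1| ≤ ‖x‖ := norm_fst_le x
      have h2 : |x.2| ≤ ‖x‖ := norm_snd_le x
      have h3 := norm_nonneg x
      apply max_le
      · change |x.2| ≤ _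
        nlinarith
      · refine (hFb x.1).trans ?_
        gcongr) (v₀, 0)
  set g : ℝ → ℝ := fun t => (γ t).1 with hgdef
  set p : ℝ → ℝ := fun t => (γ t).2 with hpdef
  have hg : ∀ t, HasDerivAt g (p t) t := fun t => (hγ t).fst
  have hp : ∀ t, HasDerivAt p (F (g t)) t := fun t => (hγ t).snd
  have hg0 : g 0 = v₀ := by simp [hgdef, h0]
  have hp0 : p 0 = 0 := by simp [hpdef, h0]
  have hdg : deriv g = p := funext fun t => (hg t).deriv
  have hdp : deriv p = fun t => F (g t) := funext fun t => (hp t).deriv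
  have hgd : Differentiable ℝ g := fun t => (hg t).differentiableAt
  have hpd : Differentiable ℝ p := fun t => (hp t).differentiableAt
  have hpm : StrictMono p := strictMono_of_deriv_pos fun t => by rw [hdp]; exact hFp _
  have hconv : ∀ s t, g s + p s * (t - s) ≤ g t := by
    have hc : ConvexOn ℝ Set.univ g := by
      apply MonotoneOn.convexOn_of_deriv convex_univ hgd.continuous.continuousOn
        hgd.differentiableOn
      rw [hdg]; exact hpm.monotone.monotoneOn _
    intro s t
    rcases lt_trichotomy s t with h | h | h
    · have := hc.le_slope_of_hasDerivAt (Set.mem_univ s) (Set.mem_univ t) h (hg s)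
      rw [slope_def_field, le_div_iff₀ (by linarith)] at this
      linarith
    · simp [h]
    · have := hc.slope_le_of_hasDerivAt (Set.mem_univ t) (Set.mem_univ s) h (hg s)
      rw [slope_def_field, div_le_iff₀ (by linarith)] at this
      linarith
  have hmin : ∀ t, v₀ ≤ g t := fun t => by
    have := hconv 0 t
    rw [hp0, hg0] at this; linarith
  have hpos : ∀ t, 0 < g t := fun t => hv₀.trans_le (hmin t)
  have hen : ∀ t, HasDerivAt (fun t => p t ^ 2 - auxq m H C (g t)) 0 t := by
    intro t
    refine (((hp t).pow 2).sub ((auxq_deriv m H C (g t) hm (hpos t)).comp t (hg t))).congr_deriv ?_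
    rw [hFe _ (hmin t)]
    simp; ring
  have hE : ∀ t, p t ^ 2 = auxq m H C (g t) := by
    intro t
    have := is_const_of_deriv_eq_zero (fun t => (hen t).differentiableAt)
      (fun t => (hen t).deriv) t 0
    simp only [hp0, hg0, hq₀] at this
    linarith
  refine ⟨g, ?_, hpos, ?_, ⟨0, fun t => hg0 ▸ hmin t⟩, ?_⟩
  · have hp1 : ContDiff ℝ 1 p := by
      rw [contDiff_one_iff_deriv, hdp]
      exact ⟨hpd, hFc.continuous.comp hgd.continuous⟩
    rw [show (2 : WithTop ℕ∞) = 1 + 1 by norm_num, contDiff_succ_iff_deriv, hdg]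
    exact ⟨hgd, by simp, hp1⟩
  · intro t
    rw [hdg, hE t, auxq]
    have : g t ^ (1 - ((m + 1 : ℕ) : ℤ)) = (g t)⁻¹ ^ m := by
      rw [show (1 - ((m + 1 : ℕ) : ℤ)) = -(m : ℤ) by push_cast; ring, zpow_neg, zpow_natCast,
        inv_pow]
    rw [this]
  · intro M
    have h1 : 0 < p 1 := hp0 ▸ hpm one_pos
    refine ⟨1 + (|M| + 1) / p 1, ?_⟩
    have h2 := hconv 1 (1 + (|M| + 1) / p 1)
    have h3 : p 1 * (1 + (|M| + 1) / p 1 - 1) = |M| + 1 := by field_simp; ring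
    have := hpos 1
    have := le_abs_self M
    linarith
end
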